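/- For A ⊆ ℕ, let A* = {2n : n ∈ A} ∪ {2n+1 : n ∉ A}. If 𝒜₀ ⊆ [ω]^ω is a family such that 𝒜₀* = {A* : A ∈ 𝒜₀} is ω-hitting, then 𝒜₀ is ω-splitting. -/

import Mathlib

open Set Topology

/-- `H` splits `A`: both `A ∩ H` and `A \ H` are infinite. -/
def Splits (H A : Set ℕ) : Prop := (A ∩ H).Infinite ∧ (A \ H).Infinite

/-- `ℋ` is ω-splitting: for each countable `𝒜 ⊆ [ω]^ω` some `H ∈ ℋ` splits
every member of `𝒜`. -/
def OmegaSplitting (ℋ : Set (Set ℕ)) : Prop :=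
  ∀ 𝒜 : Set (Set ℕ), 𝒜.Countable → (∀ A ∈ 𝒜, A.Infinite) →
    ∃ H ∈ ℋ, ∀ A ∈ 𝒜, Splits H A

/-- `ℋ` is ω-hitting: for each countable `𝒜 ⊆ [ω]^ω` some `H ∈ ℋ` has infinite
intersection with every member of `𝒜`. -/
def OmegaHitting (ℋ : Set (Set ℕ)) : Prop :=
  ∀ 𝒜 : Set (Set ℕ), 𝒜.Countable → (∀ A ∈ 𝒜, A.Infinite) →
    ∃ H ∈ ℋ, ∀ A ∈ 𝒜, (A ∩ H).Infinite

/-- `A* = {2n : n ∈ A} ∪ {2n+1 : n ∉ A}`. -/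
def starSet (A : Set ℕ) : Set ℕ := (fun n => 2 * n) '' A ∪ (fun n => 2 * n + 1) '' Aᶜ

/-!
A set `H` splits `A` exactly when `H*` meets both the even copy `2A` and the odd copy `2A + 1` of
`A` in infinite sets. So to split every member of a countable family `𝒜` it suffices to hit the
countable family `{2A : A ∈ 𝒜} ∪ {2A + 1 : A ∈ 𝒜}`.
-/

theorem two_mul_injective : Function.Injective fun n : ℕ => 2 * n :=
  mul_right_injective₀ two_ne_zero

theorem two_mul_add_one_injective : Function.Injective fun n : ℕ => 2 * n + 1 :=
  (add_left_injective 1).comp two_mul_injective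

section StarSet

variable {A H : Set ℕ} {n : ℕ}

theorem two_mul_mem_starSet : 2 * n ∈ starSet H ↔ n ∈ H := by
  have not_odd : 2 * n ∉ (fun m => 2 * m + 1) '' Hᶜ :=
    fun ⟨_, _, odd_eq_even⟩ => Nat.two_mul_ne_two_mul_add_one odd_eq_even.symm
  rw [starSet, mem_union, or_iff_left not_odd, two_mul_injective.mem_set_image]

theorem two_mul_add_one_mem_starSet : 2 * n + 1 ∈ starSet H ↔ n ∉ H := by
  have not_even : 2 * n + 1 ∉ (fun m => 2 * m) '' H :=
    fun ⟨_, _, even_eq_odd⟩ => Nat.two_mul_ne_two_mul_add_one even_eq_odd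
  rw [starSet, mem_union, or_iff_right not_even, two_mul_add_one_injective.mem_set_image,
    mem_compl_iff]

theorem image_two_mul_inter_starSet :
    (fun n => 2 * n) '' A ∩ starSet H = (fun n => 2 * n) '' (A ∩ H) := by
  have preimage_eq : (fun n => 2 * n) ⁻¹' starSet H = H := ext fun _ => two_mul_mem_starSet
  rw [← image_inter_preimage, preimage_eq]

theorem image_two_mul_add_one_inter_starSet :
    (fun n => 2 * n + 1) '' A ∩ starSet H = (fun n => 2 * n + 1) '' (A \ H) := by
  have preimage_eq : (fun n => 2 * n + 1) ⁻¹' starSet H = Hᶜ :=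
    ext fun _ => two_mul_add_one_mem_starSet
  rw [← image_inter_preimage, preimage_eq, sdiff_eq]

theorem splits_iff_infinite_image_inter_starSet :
    Splits H A ↔
      ((fun n => 2 * n) '' A ∩ starSet H).Infinite ∧
        ((fun n => 2 * n + 1) '' A ∩ starSet H).Infinite := by
  rw [image_two_mul_inter_starSet, image_two_mul_add_one_inter_starSet,
    infinite_image_iff two_mul_injective.injOn,
    infinite_image_iff two_mul_add_one_injective.injOn, Splits]

end StarSet

/-- If `𝒜₀ ⊆ [ω]^ω` is such that `𝒜₀* = {A* : A ∈ 𝒜₀}` is ω-hitting, then `𝒜₀`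
is ω-splitting. -/
theorem stmt_12 (𝒜₀ : Set (Set ℕ)) (h𝒜₀ : ∀ A ∈ 𝒜₀, A.Infinite)
    (hh : OmegaHitting (starSet '' 𝒜₀)) :
    OmegaSplitting 𝒜₀ := by
  intro 𝒜 countable infinite
  obtain ⟨_, ⟨H, hH, rfl⟩, hits⟩ :=
    hh (image (fun n => 2 * n) '' 𝒜 ∪ image (fun n => 2 * n + 1) '' 𝒜)
      ((countable.image _).union (countable.image _)) (by
        rintro _ (⟨A, hA, rfl⟩ | ⟨A, hA, rfl⟩)
        · exact (infinite A hA).image two_mul_injective.injOn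
        · exact (infinite A hA).image two_mul_add_one_injective.injOn)
  exact ⟨H, hH, fun A hA => splits_iff_infinite_image_inter_starSet.2
    ⟨hits _ (.inl (mem_image_of_mem _ hA)), hits _ (.inr (mem_image_of_mem _ hA))⟩⟩
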